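/- Let n ≥ 5 be a real number, and define c_k := S_{2k}'(√n)/(2√n · S_{2k}(√n)) for integers k ≥ 1 and c_0 := 0. Then for a real number s, sup_{t > 0} { t^s · ∑_{k=0}^{∞} (1+k)² e^{−2t(1+c_k)} } < ∞ if and only if s ≥ 3. (This is the analytic core of the sharpness of the Sobolev embedding / Hardy–Littlewood–Sobolev inequality for Aut⁺(B) with dim B = n.) -/

import Mathlib

open Polynomial

/-- The (dilated) Chebyshev polynomials of the second kind:
`S 0 = 1`, `S 1 = X`, `S (k+2) = X * S (k+1) - S k`. -/
noncomputable def S : ℕ → Polynomial ℝ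
  | 0 => 1
  | 1 => Polynomial.X
  | (k + 2) => Polynomial.X * S (k + 1) - S k

/-- The eigenvalue sequence `c_k = S_{2k}'(√n)/(2√n · S_{2k}(√n))` for `k ≥ 1`, with `c_0 = 0`. -/
noncomputable def heatEigenvalue (n : ℝ) (k : ℕ) : ℝ :=
  if k = 0 then 0
  else (S (2 * k)).derivative.eval (Real.sqrt n) /
    (2 * Real.sqrt n * (S (2 * k)).eval (Real.sqrt n))


lemma aux_inv (x : ℝ) (hx : 11/5 ≤ x) (k : ℕ) :
    0 < (S k).eval x ∧ 6/5 * (S k).eval x ≤ (S (k+1)).eval x ∧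
    (S (k+1)).eval x ≤ x * (S k).eval x ∧
    ((S k).eval x)^2 ≤ (S (k+1)).derivative.eval x * (S k).eval x
      - (S k).derivative.eval x * (S (k+1)).eval x ∧
    (S (k+1)).derivative.eval x * (S k).eval x
      - (S k).derivative.eval x * (S (k+1)).eval x ≤ 4 * ((S k).eval x)^2 := by
  induction k with
  | zero => simp [S]; linarith
  | succ k ih =>
    obtain ⟨h1, h2, h3, h4, h5⟩ := ih
    have e1 : (S (k+1+1)).eval x = x * (S (k+1)).eval x - (S k).eval x := by simp [S]
    have e2 : (S (k+1+1)).derivative.eval x = (S (k+1)).eval x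
        + x * (S (k+1)).derivative.eval x - (S k).derivative.eval x := by simp [S]
    rw [e1, e2]
    generalize (S (k+1)).eval x = p1 at *
    generalize (S k).eval x = p0 at *
    generalize (S (k+1)).derivative.eval x = d1 at *
    generalize (S k).derivative.eval x = d0 at *
    have hp1 : 0 < p1 := by linarith
    refine ⟨hp1, by nlinarith, by linarith, by nlinarith, by nlinarith⟩

lemma aux_lin (x : ℝ) (hx : 11/5 ≤ x) (k : ℕ) :
    (k:ℝ) * (S k).eval x ≤ x * (S k).derivative.eval x ∧
    (S k).derivative.eval x ≤ 4 * k * (S k).eval x := by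
  induction k with
  | zero => simp [S]
  | succ k ih =>
    obtain ⟨h1, h2, h3, h4, h5⟩ := aux_inv x hx k
    obtain ⟨i1, i2⟩ := ih
    push_cast
    generalize (S (k+1)).eval x = p1 at *
    generalize (S k).eval x = p0 at *
    generalize (S (k+1)).derivative.eval x = d1 at *
    generalize (S k).derivative.eval x = d0 at *
    have hp1 : 0 < p1 := by linarith
    constructor
    · refine le_of_mul_le_mul_right ?_ h1
      have a1 := mul_le_mul_of_nonneg_right i1 hp1.le
      have a2 := mul_le_mul_of_nonneg_left h4 (by linarith : 0 ≤ x)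
      have a3 := mul_le_mul_of_nonneg_right h3 h1.le
      nlinarith
    · refine le_of_mul_le_mul_right ?_ h1
      have a1 := mul_le_mul_of_nonneg_right i2 hp1.le
      have a3 : p0 * p0 ≤ p1 * p0 := mul_le_mul_of_nonneg_right (by linarith) h1.le
      nlinarith

lemma aux_c (n : ℝ) (hn : 5 ≤ n) (k : ℕ) :
    (k:ℝ) / n ≤ heatEigenvalue n k ∧ heatEigenvalue n k ≤ 2 * k := by
  unfold heatEigenvalue
  split_ifs with h
  · simp [h]
  have hx : 11/5 ≤ Real.sqrt n := Real.le_sqrt_of_sq_le (by linarith)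
  have hs : Real.sqrt n * Real.sqrt n = n := Real.mul_self_sqrt (by linarith)
  obtain ⟨i1, i2⟩ := aux_lin _ hx (2*k)
  have hp := (aux_inv _ hx (2*k)).1
  push_cast at i1 i2
  generalize (S (2*k)).eval (Real.sqrt n) = p at *
  generalize (S (2*k)).derivative.eval (Real.sqrt n) = d at *
  generalize Real.sqrt n = x at *
  have hx0 : 0 < x := by linarith
  subst hs
  have hk : (0:ℝ) ≤ k := Nat.cast_nonneg k
  constructor
  · rw [div_le_div_iff₀ (by positivity) (by positivity)]
    nlinarith
  · rw [div_le_iff₀ (by positivity)]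
    have : 0 ≤ k * p := by positivity
    nlinarith

lemma aux_term (n : ℝ) (hn : 5 ≤ n) (t : ℝ) (ht : 0 < t) (k : ℕ) :
    (1 + (k : ℝ)) ^ 2 * Real.exp (-2 * t * (1 + heatEigenvalue n k)) ≤
      (2 * Real.exp (-(8/5) * t) * Real.exp (-(2*t/n))) *
        (((k+2).choose 2 : ℕ) * Real.exp (-(2*t/n)) ^ k) := by
  have hc := (aux_c n hn k).1
  have h1 : (2:ℝ) * ((k+2).choose 2 : ℕ) = (k+2) * (k+1) := by
    rw [Nat.cast_choose_two]; push_cast; ring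
  have hk : (0:ℝ) ≤ k := Nat.cast_nonneg k
  have hn1 : 1/n ≤ 1/5 := one_div_le_one_div_of_le (by norm_num) hn
  have h2 : Real.exp (-2 * t * (1 + heatEigenvalue n k)) ≤
      Real.exp (-(8/5) * t) * Real.exp (-(2*t/n)) * Real.exp (-(2*t/n)) ^ k := by
    rw [← Real.exp_nat_mul, ← Real.exp_add, ← Real.exp_add]
    apply Real.exp_le_exp.2
    have : t * (4/5 + 1/n + k/n) ≤ t * (1 + heatEigenvalue n k) :=
      mul_le_mul_of_nonneg_left (by linarith) ht.le
    have e : -(8/5) * t + -(2*t/n) + k * -(2*t/n) = -2 * (t * (4/5 + 1/n + k/n)) := by ring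
    rw [e]; linarith
  calc _ ≤ ((k+2) * (k+1) : ℝ) * (Real.exp (-(8/5) * t) * Real.exp (-(2*t/n)) * Real.exp (-(2*t/n)) ^ k) := by
        gcongr
        nlinarith
    _ = _ := by rw [← h1]; ring

lemma aux_sum (n : ℝ) (hn : 5 ≤ n) (t : ℝ) (ht : 0 < t) :
    Summable (fun k : ℕ => (1 + (k : ℝ)) ^ 2 * Real.exp (-2 * t * (1 + heatEigenvalue n k))) ∧
    ∑' k : ℕ, (1 + (k : ℝ)) ^ 2 * Real.exp (-2 * t * (1 + heatEigenvalue n k)) ≤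
      n ^ 3 / 4 * (Real.exp (-(4/5) * t) / t ^ 3) := by
  have hn0 : 0 < n := by linarith
  set u := 2*t/n with hu
  have hu0 : 0 < u := by positivity
  have hut : u ≤ 2/5*t := by
    rw [hu, div_le_iff₀ hn0]; nlinarith
  set r := Real.exp (-u) with hr
  have hr0 : 0 < r := Real.exp_pos _
  have hr1 : r < 1 := by rw [hr, Real.exp_lt_one_iff]; linarith
  have hnr : ‖r‖ < 1 := by rwa [Real.norm_of_nonneg hr0.le]
  have hs := summable_choose_mul_geometric_of_norm_lt_one 2 hnr
  have hs' := hs.mul_left (2 * Real.exp (-(8/5) * t) * r)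
  have hsum := Summable.of_nonneg_of_le (fun k => by positivity) (aux_term n hn t ht) hs'
  refine ⟨hsum, ?_⟩
  refine (hsum.tsum_le_tsum (aux_term n hn t ht) hs').trans ?_
  rw [tsum_mul_left, tsum_choose_mul_geometric_of_norm_lt_one 2 hnr]
  have h1 : r * u ≤ 1 - r := by
    have a := Real.add_one_le_exp u
    have b : r * Real.exp u = 1 := by rw [hr, ← Real.exp_add]; simp
    nlinarith
  have h2 : Real.exp (-(8/5) * t) ≤ Real.exp (-(4/5)*t) * r^2 := by
    rw [hr, ← Real.exp_nat_mul, ← Real.exp_add]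
    apply Real.exp_le_exp.2
    push_cast; linarith
  have hru : 0 < r * u := by positivity
  calc 2 * Real.exp (-(8/5) * t) * r * (1 / (1 - r) ^ (2+1))
      ≤ 2 * (Real.exp (-(4/5)*t) * r^2) * r * (1 / (r * u) ^ (2+1)) := by gcongr
    _ = _ := by
        have hu2 : t = u * n / 2 := by rw [hu]; field_simp
        generalize Real.exp (-(4/5)*t) = E
        clear_value r u
        rw [hu2, show 2 + 1 = 3 from rfl]
        field_simp
        try ring

lemma aux_bdd (p : ℝ) (hp : 0 ≤ p) : ∃ M : ℝ, ∀ t : ℝ, 0 < t →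
    t ^ p * Real.exp (-(4/5)*t) ≤ M := by
  obtain ⟨N, hN⟩ := exists_nat_ge p
  refine ⟨1 + (5/4)^N * N.factorial, fun t ht => ?_⟩
  have h1 : t ^ p ≤ 1 + t ^ N := by
    rcases le_total t 1 with h | h
    · have := Real.rpow_le_one ht.le h hp
      have : 0 < t ^ N := by positivity
      linarith
    · have := Real.rpow_le_rpow_of_exponent_le h hN
      rw [Real.rpow_natCast] at this
      linarith
  have h2 := Real.pow_div_factorial_le_exp (4/5*t) (by positivity) N
  rw [div_le_iff₀ (by positivity)] at h2
  have h3 : t ^ N ≤ (5/4)^N * N.factorial * Real.exp (4/5*t) := by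
    have : t ^ N = (5/4)^N * (4/5*t)^N := by rw [← mul_pow]; congr 1; ring
    rw [this, mul_assoc, mul_comm (N.factorial : ℝ)]
    gcongr
  have h4 : (1:ℝ) ≤ Real.exp (4/5*t) := Real.one_le_exp (by positivity)
  have h5 : Real.exp (-(4/5)*t) = (Real.exp (4/5*t))⁻¹ := by rw [← Real.exp_neg]; congr 1; ring
  rw [h5, ← div_eq_mul_inv, div_le_iff₀ (Real.exp_pos _)]
  linarith

lemma aux_sq (N : ℕ) : (N:ℝ)^3/3 ≤ ∑ k ∈ Finset.range N, (1+(k:ℝ))^2 := by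
  induction N with
  | zero => simp
  | succ N ih =>
    rw [Finset.sum_range_succ]; push_cast
    have : (0:ℝ) ≤ N := Nat.cast_nonneg N
    nlinarith

theorem sharp_sobolev_embedding_core (n : ℝ) (hn : 5 ≤ n) (s : ℝ) :
    (∃ M : ℝ, ∀ t : ℝ, 0 < t →
      t ^ s * ∑' k : ℕ, (1 + (k : ℝ)) ^ 2 *
        Real.exp (-2 * t * (1 + heatEigenvalue n k)) ≤ M) ↔
    3 ≤ s := by
  constructor
  · rintro ⟨M, hM⟩
    by_contra! hs
    have key : ∀ N : ℕ, 1 ≤ N → (N:ℝ) ^ (3 - s) ≤ 3 * Real.exp 4 * M := by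
      intro N hN
      have hN0 : (0:ℝ) < N := by exact_mod_cast hN
      have ht : (0:ℝ) < 1 / N := by positivity
      have h1 := hM _ ht
      have hsum := (aux_sum n hn _ ht).1
      have h2 := hsum.sum_le_tsum (Finset.range N) (fun k _ => by positivity)
      have h3 : Real.exp (-4) * ∑ k ∈ Finset.range N, (1+(k:ℝ))^2 ≤
          ∑ k ∈ Finset.range N, (1 + (k : ℝ)) ^ 2 *
            Real.exp (-2 * (1 / (N:ℝ)) * (1 + heatEigenvalue n k)) := by
        rw [Finset.mul_sum]
        refine Finset.sum_le_sum fun k hk => ?_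
        rw [mul_comm]
        refine mul_le_mul_of_nonneg_left (Real.exp_le_exp.2 ?_) (by positivity)
        have hk' : (k:ℝ) + 1 ≤ N := by exact_mod_cast Finset.mem_range.1 hk
        have hc := (aux_c n hn k).2
        have : 1/(N:ℝ) * (1 + heatEigenvalue n k) ≤ 2 := by
          rw [one_div, inv_mul_le_iff₀ hN0]; linarith
        linarith
      have h4 := mul_le_mul_of_nonneg_left (aux_sq N) (Real.exp_pos (-4)).le
      have h5 := mul_le_mul_of_nonneg_left (h4.trans (h3.trans h2)) (Real.rpow_nonneg ht.le s)
      have h6 := h5.trans h1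
      have e : (1/(N:ℝ))^s * (Real.exp (-4) * ((N:ℝ)^3/3)) = (N:ℝ)^(3-s) / (3 * Real.exp 4) := by
        rw [Real.rpow_sub hN0, one_div, Real.inv_rpow hN0.le, Real.exp_neg]
        have : (N:ℝ)^(3:ℝ) = (N:ℝ)^3 := by exact_mod_cast Real.rpow_natCast (N:ℝ) 3
        rw [this]; field_simp
      rw [e, div_le_iff₀ (by positivity)] at h6
      linarith
    have ht := (tendsto_rpow_atTop (by linarith : 0 < 3 - s)).comp
      (tendsto_natCast_atTop_atTop (R := ℝ))
    obtain ⟨N, hN1, hN2⟩ := ((ht.eventually_gt_atTop (3 * Real.exp 4 * M)).and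
      (Filter.eventually_ge_atTop 1)).exists
    exact absurd (key N hN2) (not_le.2 hN1)
  · intro hs
    obtain ⟨M, hM⟩ := aux_bdd (s - 3) (by linarith)
    refine ⟨n^3/4 * M, fun t ht => ?_⟩
    have hn0 : 0 < n := by linarith
    have h1 := mul_le_mul_of_nonneg_left (aux_sum n hn t ht).2 (Real.rpow_nonneg ht.le s)
    have h2 := mul_le_mul_of_nonneg_left (hM t ht) (by positivity : 0 ≤ n^3/4)
    refine h1.trans (le_trans (le_of_eq ?_) h2)
    have : t^(3:ℝ) = t^3 := by exact_mod_cast Real.rpow_natCast t 3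
    rw [Real.rpow_sub ht, this]; field_simp
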